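/- arXiv:1205.5134 — 2 statements merged into one kernel-verified Lean document; each statement's English description precedes it below -/
import Mathlib

section
/- Let K be a field, n ≥ 1, and let σ, τ be ring automorphisms of K such that σ∘τ = τ∘σ and σⁿ = id. Let γ, θ ∈ K satisfy σ(γ) = γ, τ(γ) = γ and σ(θ) = θ. Assume that every nonzero element of D is an invertible matrix (i.e., the cyclic algebra is division). Then the following are equivalent: (i) every nonzero matrix α_θ(X,Y) with X, Y ∈ D is invertible; (ii) for every Z ∈ D, Z·τ(Z) ≠ θ·Iₙ, where Iₙ is the n×n identity matrix. -/
open Matrix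

noncomputable section

/-- The matrix `Γ` of the left-regular representation of the generator `e` of the
cyclic algebra `(K/F, σ, γ)`: the `(i+1, i)` entries are `1`, the `(0, n-1)` entry is `γ`. -/
def Gam (n : ℕ) {K : Type} [Field K] (γ : K) : Matrix (Fin n) (Fin n) K :=
  Matrix.of fun i j =>
    if (i : ℕ) = (j : ℕ) + 1 then (1 : K)
    else if (i : ℕ) = 0 ∧ (j : ℕ) = n - 1 then γ else 0

/-- The image `D` of the cyclic algebra `(K/F, σ, γ)` under its left-regular representation:
matrices `∑ k, diag(c_k, σ(c_k), …, σ^{n-1}(c_k)) * Γ^k`. -/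
def cyclicRep (n : ℕ) {K : Type} [Field K] (σ : RingAut K) (γ : K) :
    Set (Matrix (Fin n) (Fin n) K) :=
  {M | ∃ c : Fin n → K,
    M = ∑ k : Fin n, Matrix.diagonal (fun i : Fin n => (σ ^ (i : ℕ)) (c k)) * (Gam n γ) ^ (k : ℕ)}

/-- The iterated construction `α_θ(X, Y) = [[X, θ·τ(Y)], [Y, τ(X)]]`. -/
def alphaTheta (n : ℕ) {K : Type} [Field K] (θ : K) (τ : RingAut K)
    (X Y : Matrix (Fin n) (Fin n) K) :
    Matrix (Fin n ⊕ Fin n) (Fin n ⊕ Fin n) K :=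
  Matrix.fromBlocks X (θ • Y.map ⇑τ) Y (X.map ⇑τ)

/-- The iterated code `A = {α_θ(X,Y) : X, Y ∈ D}`. -/
def iterCode (n : ℕ) {K : Type} [Field K] (σ τ : RingAut K) (γ θ : K) :
    Set (Matrix (Fin n ⊕ Fin n) (Fin n ⊕ Fin n) K) :=
  {M | ∃ X ∈ cyclicRep n σ γ, ∃ Y ∈ cyclicRep n σ γ, M = alphaTheta n θ τ X Y}



section helpers

variable {K : Type} [Field K]

/-- diagonal embedding -/
def dg (n : ℕ) (σ : RingAut K) (a : K) : Matrix (Fin n) (Fin n) K :=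
  Matrix.diagonal (fun i : Fin n => (σ ^ (i : ℕ)) a)

/-- element with coordinates c -/
def el (n : ℕ) (σ : RingAut K) (γ : K) (c : Fin n → K) : Matrix (Fin n) (Fin n) K :=
  ∑ k : Fin n, dg n σ (c k) * (Gam n γ) ^ (k : ℕ)

lemma mem_iff (n : ℕ) (σ : RingAut K) (γ : K) (M : Matrix (Fin n) (Fin n) K) :
    M ∈ cyclicRep n σ γ ↔ ∃ c, M = el n σ γ c := Iff.rfl

lemma dg_add (n : ℕ) (σ : RingAut K) (a b : K) : dg n σ (a + b) = dg n σ a + dg n σ b := by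
  simp [dg, Matrix.diagonal_add]

lemma dg_mul (n : ℕ) (σ : RingAut K) (a b : K) : dg n σ (a * b) = dg n σ a * dg n σ b := by
  simp [dg, Matrix.diagonal_mul_diagonal]

lemma dg_zero (n : ℕ) (σ : RingAut K) : dg n σ (0 : K) = 0 := by
  ext i j; simp [dg, Matrix.diagonal_apply]

lemma dg_one (n : ℕ) (σ : RingAut K) : dg n σ (1 : K) = 1 := by
  ext i j; simp [dg, Matrix.diagonal_apply, Matrix.one_apply]

lemma pow_fix (σ : RingAut K) (a : K) (h : σ a = a) (k : ℕ) : (σ ^ k) a = a := by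
  induction k with
  | zero => simp
  | succ k ih => rw [pow_succ, RingAut.mul_apply, h, ih]

lemma dg_fix (n : ℕ) (σ : RingAut K) (a : K) (h : σ a = a) : dg n σ a = a • 1 := by
  ext i j; simp [dg, Matrix.diagonal_apply, Matrix.one_apply, pow_fix σ a h]

lemma el_add (n : ℕ) (σ : RingAut K) (γ : K) (c d : Fin n → K) :
    el n σ γ (c + d) = el n σ γ c + el n σ γ d := by
  simp [el, dg_add, add_mul, Finset.sum_add_distrib]

lemma el_smul (n : ℕ) (σ : RingAut K) (γ : K) (a : K) (c : Fin n → K) :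
    el n σ γ (a • c) = dg n σ a * el n σ γ c := by
  simp [el, dg_mul, Finset.mul_sum, mul_assoc]

lemma el_single (n : ℕ) (σ : RingAut K) (γ : K) (k : Fin n) (a : K) :
    el n σ γ (Pi.single k a) = dg n σ a * Gam n γ ^ (k : ℕ) := by
  rw [el, Finset.sum_eq_single k]
  · simp
  · intro b _ hb; simp [hb, dg_zero]
  · simp

lemma gam_col (n : ℕ) (γ : K) (M : Matrix (Fin n) (Fin n) K) (i j : Fin n) (h : (j : ℕ) + 1 < n) :
    (M * Gam n γ) i j = M i ⟨j + 1, h⟩ := by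
  rw [Matrix.mul_apply, Finset.sum_eq_single ⟨j + 1, h⟩]
  · simp [Gam]
  · intro b _ hb
    have h1 : ¬ ((b : ℕ) = j + 1) := fun e => hb (Fin.ext e)
    have h2 : ¬ ((j : ℕ) = n - 1) := by omega
    simp [Gam, h1, h2]
  · simp

lemma gam_col_last (n : ℕ) (γ : K) (M : Matrix (Fin n) (Fin n) K) (i j : Fin n)
    (h : (j : ℕ) + 1 = n) :
    (M * Gam n γ) i j = M i ⟨0, by omega⟩ * γ := by
  rw [Matrix.mul_apply, Finset.sum_eq_single ⟨0, by omega⟩]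
  · have h2 : ((j : ℕ) = n - 1) := by omega
    simp [Gam, h2]
  · intro b _ hb
    have h1 : ¬ ((b : ℕ) = j + 1) := by omega
    have h2 : ¬ ((b : ℕ) = 0) := fun e => hb (Fin.ext e)
    simp [Gam, h1, h2]
  · simp

lemma gam_pow_col (n : ℕ) (γ : K) (k : ℕ) : ∀ (M : Matrix (Fin n) (Fin n) K) (i j : Fin n)
    (h : (j : ℕ) + k < n), (M * Gam n γ ^ k) i j = M i ⟨j + k, h⟩ := by
  induction k with
  | zero => intro M i j h; simp
  | succ k ih =>
    intro M i j h
    rw [pow_succ', ← mul_assoc, ih _ i j (by omega), gam_col n γ M i _ (by simp; omega)]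
    rfl

lemma gam_pow_n (n : ℕ) (γ : K) : Gam n γ ^ n = γ • 1 := by
  have key : ∀ (i j : Fin n), (Gam n γ ^ n) i j = ((1 : Matrix (Fin n) (Fin n) K) i j) * γ := by
    intro i j
    have hj := j.2
    have e : Gam n γ ^ n = Gam n γ ^ (j : ℕ) * Gam n γ * Gam n γ ^ (n - 1 - j) := by
      rw [← pow_succ, ← pow_add]; congr 1; omega
    rw [e, gam_pow_col n γ _ _ i j (by omega), gam_col_last _ _ _ _ _ (by simp; omega)]
    have := gam_pow_col n γ j 1 i ⟨0, by omega⟩ (by simp)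
    rw [one_mul] at this
    have ej : (⟨((⟨0, by omega⟩ : Fin n) : ℕ) + j, by simp⟩ : Fin n) = j := by ext; simp
    rw [this, ej]
  ext i j
  rw [key]; simp [mul_comm]

lemma el_col (n : ℕ) (hn : 1 ≤ n) (σ : RingAut K) (γ : K) (c : Fin n → K) (i : Fin n) :
    el n σ γ c i ⟨0, hn⟩ = (σ ^ (i : ℕ)) (c i) := by
  rw [el, Matrix.sum_apply, Finset.sum_eq_single i]
  · rw [gam_pow_col _ _ _ _ _ _ (by simp)]; simp [dg]
  · intro b _ hb
    rw [gam_pow_col _ _ _ _ _ _ (by simp)]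
    have : i ≠ b := fun e => hb e.symm
    simp [dg, Matrix.diagonal_apply, this]
  · simp

lemma el_inj (n : ℕ) (hn : 1 ≤ n) (σ : RingAut K) (γ : K) : Function.Injective (el n σ γ) := by
  intro c d h
  funext i
  have := congrFun (congrFun h i) ⟨0, hn⟩
  rw [el_col, el_col] at this
  exact (σ ^ (i : ℕ)).injective this

lemma gam_dg (n : ℕ) (σ : RingAut K) (hσn : σ ^ n = 1) (γ : K) (a : K) :
    Gam n γ * dg n σ (σ a) = dg n σ a * Gam n γ := by
  ext i j
  rw [dg, dg, Matrix.mul_diagonal, Matrix.diagonal_mul]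
  have e : (σ ^ (j : ℕ)) (σ a) = (σ ^ ((j : ℕ) + 1)) a := by
    rw [pow_succ, RingAut.mul_apply]
  rw [e]
  simp only [Gam, Matrix.of_apply]
  split_ifs with h1 h2
  · rw [h1]; ring
  · have : (j : ℕ) + 1 = n := by have := j.2; omega
    rw [this, hσn, h2.1]; simp [mul_comm]
  · simp

/-- D as additive subgroup -/
def DG (n : ℕ) (σ : RingAut K) (γ : K) : AddSubgroup (Matrix (Fin n) (Fin n) K) :=
  (AddMonoidHom.mk' (el n σ γ) (el_add n σ γ)).range

lemma mem_DG (n : ℕ) (σ : RingAut K) (γ : K) (M : Matrix (Fin n) (Fin n) K) :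
    M ∈ DG n σ γ ↔ M ∈ cyclicRep n σ γ := by
  rw [mem_iff, DG, AddMonoidHom.mem_range]
  constructor
  · rintro ⟨c, h⟩; exact ⟨c, h.symm⟩
  · rintro ⟨c, h⟩; exact ⟨c, h.symm⟩

lemma dg_gam_mem (n : ℕ) (hn : 1 ≤ n) (σ : RingAut K) (γ : K) (hσγ : σ γ = γ) (k : ℕ) :
    ∀ a, dg n σ a * Gam n γ ^ k ∈ DG n σ γ := by
  induction k using Nat.strong_induction_on with
  | _ k ih =>
    intro a
    by_cases h : k < n
    · exact ⟨Pi.single ⟨k, h⟩ a, el_single n σ γ ⟨k, h⟩ a⟩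
    · have : Gam n γ ^ k = dg n σ γ * Gam n γ ^ (k - n) := by
        rw [dg_fix n σ γ hσγ, ← gam_pow_n, ← pow_add]; congr 1; omega
      rw [this, ← mul_assoc, ← dg_mul]
      exact ih _ (by omega) _

lemma dg_mem (n : ℕ) (σ : RingAut K) (γ : K) (a : K) (M : Matrix (Fin n) (Fin n) K)
    (h : M ∈ DG n σ γ) : dg n σ a * M ∈ DG n σ γ := by
  obtain ⟨c, rfl⟩ := h
  exact ⟨a • c, el_smul n σ γ a c⟩

lemma gam_mem (n : ℕ) (hn : 1 ≤ n) (σ : RingAut K) (hσn : σ ^ n = 1) (γ : K) (hσγ : σ γ = γ)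
    (M : Matrix (Fin n) (Fin n) K)
    (h : M ∈ DG n σ γ) : Gam n γ * M ∈ DG n σ γ := by
  obtain ⟨c, rfl⟩ := h
  change Gam n γ * el n σ γ c ∈ _
  rw [el, Finset.mul_sum]
  refine sum_mem fun k _ => ?_
  obtain ⟨b, hb⟩ := σ.surjective (c k)
  rw [← hb, ← mul_assoc, gam_dg n σ hσn, mul_assoc, ← pow_succ']
  exact dg_gam_mem n hn σ γ hσγ _ _

lemma mul_mem_DG (n : ℕ) (hn : 1 ≤ n) (σ : RingAut K) (hσn : σ ^ n = 1) (γ : K) (hσγ : σ γ = γ)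
    (M N : Matrix (Fin n) (Fin n) K)
    (h : M ∈ DG n σ γ) (h' : N ∈ DG n σ γ) : M * N ∈ DG n σ γ := by
  obtain ⟨c, rfl⟩ := h
  change el n σ γ c * N ∈ _
  rw [el, Finset.sum_mul]
  refine sum_mem fun k _ => ?_
  rw [mul_assoc]
  refine dg_mem _ _ _ _ _ ?_
  generalize (k : ℕ) = m
  induction m with
  | zero => simpa using h'
  | succ m ih => rw [pow_succ', mul_assoc]; exact gam_mem n hn σ hσn γ hσγ _ ih

lemma one_mem_DG (n : ℕ) (hn : 1 ≤ n) (σ : RingAut K) (γ : K) (hσγ : σ γ = γ) :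
    1 ∈ DG n σ γ := by
  simpa [dg_one] using dg_gam_mem n hn σ γ hσγ 0 1

lemma smul_mem_DG (n : ℕ) (σ : RingAut K) (γ : K) (a : K) (ha : σ a = a)
    (M : Matrix (Fin n) (Fin n) K) (h : M ∈ DG n σ γ) : a • M ∈ DG n σ γ := by
  have := dg_mem n σ γ a M h
  rwa [dg_fix n σ a ha, smul_mul_assoc, one_mul] at this

lemma map_eq (n : ℕ) (τ : RingAut K) (M : Matrix (Fin n) (Fin n) K) :
    M.map ⇑τ = (τ : K ≃+* K).toRingHom.mapMatrix M := rfl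

lemma map_mem_DG (n : ℕ) (σ τ : RingAut K) (hcomm : σ * τ = τ * σ) (γ : K)
    (hτγ : τ γ = γ) (M : Matrix (Fin n) (Fin n) K)
    (h : M ∈ DG n σ γ) : M.map ⇑τ ∈ DG n σ γ := by
  obtain ⟨c, rfl⟩ := h
  refine ⟨fun i => τ (c i), ?_⟩
  change el n σ γ _ = (el n σ γ c).map _
  rw [map_eq, el, el, map_sum]
  refine Finset.sum_congr rfl fun k _ => ?_
  rw [map_mul, map_pow, ← map_eq, ← map_eq]
  congr 1
  · ext i j
    have hc : ∀ (m : ℕ) (x : K), (σ ^ m) (τ x) = τ ((σ ^ m) x) := by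
      intro m x
      have : σ ^ m * τ = τ * σ ^ m := (Commute.pow_left (show Commute σ τ from hcomm) m)
      exact congrArg (fun f : RingAut K => f x) this
    by_cases hij : i = j
    · subst hij; simp [dg, hc]
    · simp [dg, hij]
  · congr 1
    ext i j
    simp only [Gam, Matrix.of_apply, Matrix.map_apply]
    split_ifs <;> simp [hτγ]

lemma exists_inv (n : ℕ) (hn : 1 ≤ n) (σ : RingAut K) (hσn : σ ^ n = 1) (γ : K) (hσγ : σ γ = γ)
    (Y : Matrix (Fin n) (Fin n) K) (h : Y ∈ DG n σ γ) (hY : IsUnit Y) :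
    ∃ W ∈ DG n σ γ, W * Y = 1 := by
  have hex : ∀ c, ∃ d, el n σ γ d = el n σ γ c * Y := fun c =>
    mul_mem_DG n hn σ hσn γ hσγ _ _ ⟨c, rfl⟩ h
  choose f hf using hex
  let F : (Fin n → K) →ₗ[K] (Fin n → K) :=
    { toFun := f
      map_add' := fun a b => el_inj n hn σ γ (by rw [hf, el_add, el_add, hf, hf, add_mul])
      map_smul' := fun a b => el_inj n hn σ γ (by
        rw [hf, el_smul, RingHom.id_apply, el_smul, hf, mul_assoc]) }
  have hinj : Function.Injective F := by
    intro a b hab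
    have : el n σ γ (f a) = el n σ γ (f b) := congrArg _ hab
    rw [hf, hf] at this
    exact el_inj n hn σ γ (hY.mul_right_cancel this)
  obtain ⟨e, he⟩ := one_mem_DG n hn σ γ hσγ
  obtain ⟨c, hc⟩ := (LinearMap.injective_iff_surjective.mp hinj) e
  refine ⟨el n σ γ c, ⟨c, rfl⟩, ?_⟩
  rw [← hf, ← he]
  exact congrArg _ hc

end helpers

/-- assuming the cyclic algebra is division (every nonzero element of `D`
is invertible), the following are equivalent: (i) every nonzero `α_θ(X,Y)` with
`X, Y ∈ D` is invertible; (ii) `Z·τ(Z) ≠ θ·Iₙ` for every `Z ∈ D`. -/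
theorem stmt1 {K : Type} [Field K] (n : ℕ) (hn : 1 ≤ n) (σ τ : RingAut K)
    (hcomm : σ * τ = τ * σ) (hσn : σ ^ n = 1)
    (γ θ : K) (hσγ : σ γ = γ) (hτγ : τ γ = γ) (hσθ : σ θ = θ)
    (hdiv : ∀ M ∈ cyclicRep n σ γ, M ≠ 0 → IsUnit M) :
    (∀ X ∈ cyclicRep n σ γ, ∀ Y ∈ cyclicRep n σ γ,
        alphaTheta n θ τ X Y ≠ 0 → IsUnit (alphaTheta n θ τ X Y)) ↔
      (∀ Z ∈ cyclicRep n σ γ,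
        Z * Z.map ⇑τ ≠ θ • (1 : Matrix (Fin n) (Fin n) K)) := by
  haveI : Nonempty (Fin n) := ⟨⟨0, hn⟩⟩
  simp only [← mem_DG] at *
  constructor
  · intro H Z hZ hEq
    have h1 := one_mem_DG n hn σ γ hσγ
    have hone : (1 : Matrix (Fin n) (Fin n) K).map ⇑τ = 1 := by rw [map_eq, map_one]
    have hne : alphaTheta n θ τ Z 1 ≠ 0 := by
      intro h0
      rw [alphaTheta, ← Matrix.fromBlocks_zero, Matrix.fromBlocks_inj] at h0
      exact one_ne_zero h0.2.2.1
    have hu := H Z hZ 1 h1 hne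
    have hz : Matrix.fromBlocks 1 (-Z) 0 0 * alphaTheta n θ τ Z 1 = 0 := by
      rw [alphaTheta, Matrix.fromBlocks_multiply, hone]
      simp [hEq]
    have := hu.mul_left_eq_zero.mp hz
    rw [← Matrix.fromBlocks_zero, Matrix.fromBlocks_inj] at this
    exact one_ne_zero this.1
  · intro H X hX Y hY hne
    by_cases hY0 : Y = 0
    · subst hY0
      have hX0 : X ≠ 0 := by
        rintro rfl
        apply hne
        simp [alphaTheta]
      have hXu := hdiv X hX hX0
      have hXt : IsUnit (X.map ⇑τ) := by rw [map_eq]; exact hXu.map _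
      rw [alphaTheta, Matrix.isUnit_fromBlocks_zero₂₁]
      exact ⟨hXu, hXt⟩
    · have hYu := hdiv Y hY hY0
      obtain ⟨W, hW, hWY⟩ := exists_inv n hn σ hσn γ hσγ Y hY hYu
      have hYW : Y * W = 1 := mul_eq_one_comm.mp hWY
      letI : Invertible Y := ⟨W, hWY, hYW⟩
      have hS : θ • Y.map ⇑τ - X * W * X.map ⇑τ ∈ DG n σ γ := by
        refine sub_mem (smul_mem_DG n σ γ θ hσθ _ (map_mem_DG n σ τ hcomm γ hτγ _ hY)) ?_
        exact mul_mem_DG n hn σ hσn γ hσγ _ _ (mul_mem_DG n hn σ hσn γ hσγ _ _ hX hW)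
          (map_mem_DG n σ τ hcomm γ hτγ _ hX)
      have hS0 : θ • Y.map ⇑τ - X * W * X.map ⇑τ ≠ 0 := by
        intro h0
        refine H (X * W) (mul_mem_DG n hn σ hσn γ hσγ _ _ hX hW) ?_
        have hm : (X * W).map ⇑τ = X.map ⇑τ * W.map ⇑τ := by simp only [map_eq, map_mul]
        have hm2 : Y.map ⇑τ * W.map ⇑τ = 1 := by
          simp only [map_eq, ← map_mul, hYW, map_one]
        rw [hm, ← mul_assoc, ← sub_eq_zero.mp h0, smul_mul_assoc, hm2]
      have hSu := hdiv _ hS hS0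
      rw [← Matrix.isUnit_submatrix_equiv (Equiv.sumComm (Fin n) (Fin n)) (Equiv.refl _)]
      have e : (alphaTheta n θ τ X Y).submatrix (Equiv.sumComm (Fin n) (Fin n)) (Equiv.refl _) =
          Matrix.fromBlocks Y (X.map ⇑τ) X (θ • Y.map ⇑τ) := by
        ext (i | i) (j | j) <;> rfl
      rw [e, Matrix.isUnit_fromBlocks_iff_of_invertible₁₁]
      exact hSu
end
end

section
/- Let F be a number field with ring of integers O_F, and let a ∈ O_F be a nonzero element such that the ideal a·O_F is prime. Let γ, θ ∈ O_F be such that neither θ nor γ is a square modulo a·O_F (for every b ∈ O_F, a divides neither b² − θ nor b² − γ). Suppose moreover that the quadratic form ⟨γ, −θ⟩ is anisotropic over K = F(√a), i.e., for all x₀, x₁, y₀, y₁ ∈ F, if γ·(x₀² + a·x₁²) = θ·(y₀² + a·y₁²) and γ·x₀·x₁ = θ·y₀·y₁, then x₀ = x₁ = y₀ = y₁ = 0. Then for every z ∈ ℍ[F,a,γ], z·σ(z) ≠ θ; consequently every nonzero element of the iterated code α_θ(Q,Q) has nonzero determinant. -/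
open NumberField Quaternion

noncomputable section

/-- The automorphism `σ` of the quaternion algebra `ℍ[F, a, γ]` given by
`σ(x₀ + x₁i + x₂j + x₃k) = x₀ − x₁i + x₂j − x₃k`. -/
def qsigma {F : Type} [Field F] (a γ : F) (z : ℍ[F, a, γ]) : ℍ[F, a, γ] :=
  ⟨z.re, -z.imI, z.imJ, -z.imK⟩

theorem aux_dvd {R : Type} [CommRing R] (a c : R) (ha : Prime a)
    (hm : (Ideal.span ({a} : Set R)).IsMaximal)
    (hc : ∀ b : R, ¬ (a ∣ b ^ 2 - c)) (x y : R) (h : a ∣ x ^ 2 - c * y ^ 2) :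
    a ∣ x ∧ a ∣ y := by
  have hy : a ∣ y := by
    by_contra hy
    have hy' : y ∉ Ideal.span ({a} : Set R) := by
      rwa [Ideal.mem_span_singleton]
    obtain ⟨w, i, hi, hw⟩ := hm.exists_inv hy'
    rw [Ideal.mem_span_singleton] at hi
    apply hc (x * w)
    obtain ⟨s, hs⟩ := h
    obtain ⟨t, ht⟩ := hi
    refine ⟨w ^ 2 * s - c * t * (w * y + 1), ?_⟩
    have ht' : a * t = 1 - w * y := by rw [← ht, ← hw]; ring
    linear_combination w ^ 2 * hs + c * (w * y + 1) * ht'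
  refine ⟨?_, hy⟩
  apply ha.dvd_of_dvd_pow (n := 2)
  have h2 : a ∣ c * y ^ 2 := (hy.pow (by norm_num)).mul_left _
  have := dvd_add h h2
  simpa using this

theorem aux_descent {R : Type} [CommRing R] [IsDomain R] (a γ θ : R) (ha : Prime a)
    (hm : (Ideal.span ({a} : Set R)).IsMaximal)
    (hθ : ∀ b : R, ¬ (a ∣ b ^ 2 - θ))
    (hγ : ∀ b : R, ¬ (a ∣ b ^ 2 - γ)) (n : ℕ) :
    ∀ d x y z : R, θ * d ^ 2 = x ^ 2 - a * y ^ 2 + γ * a * z ^ 2 → a ^ n ∣ d := by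
  induction n with
  | zero => intros; simp
  | succ n ih =>
    intro d x y z h
    obtain ⟨⟨x', rfl⟩, ⟨d', rfl⟩⟩ := aux_dvd a θ ha hm hθ x d
      ⟨y ^ 2 - γ * z ^ 2, by linear_combination -h⟩
    have h1 : a * (θ * d' ^ 2) = a * x' ^ 2 - y ^ 2 + γ * z ^ 2 := by
      apply mul_left_cancel₀ ha.ne_zero
      linear_combination h
    obtain ⟨⟨y', rfl⟩, ⟨z', rfl⟩⟩ := aux_dvd a γ ha hm hγ y z
      ⟨x' ^ 2 - θ * d' ^ 2, by linear_combination h1⟩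
    rw [pow_succ']
    apply mul_dvd_mul_left
    apply ih d' x' y' z'
    apply mul_left_cancel₀ ha.ne_zero
    linear_combination h1

/-- for a number field `F`, if `a ∈ O_F` is nonzero and generates a prime
ideal, neither `θ` nor `γ` is a square modulo `a·O_F`, and the quadratic form `⟨γ, −θ⟩`
is anisotropic over `K = F(√a)` (expressed componentwise), then `z·σ(z) ≠ θ` for every
quaternion `z ∈ ℍ[F, a, γ]`; consequently every nonzero element of the iterated code
`α_θ(Q, Q)` has nonzero determinant. -/
theorem stmt11 (F : Type) [Field F] [NumberField F]
    (a γ θ : 𝓞 F) (ha0 : a ≠ 0)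
    (hprime : (Ideal.span ({a} : Set (𝓞 F))).IsPrime)
    (hθ : ∀ b : 𝓞 F, ¬ (a ∣ b ^ 2 - θ))
    (hγ : ∀ b : 𝓞 F, ¬ (a ∣ b ^ 2 - γ))
    (hformK : ∀ x₀ x₁ y₀ y₁ : F,
      (algebraMap (𝓞 F) F γ) * (x₀ ^ 2 + (algebraMap (𝓞 F) F a) * x₁ ^ 2) =
          (algebraMap (𝓞 F) F θ) * (y₀ ^ 2 + (algebraMap (𝓞 F) F a) * y₁ ^ 2) →
        (algebraMap (𝓞 F) F γ) * x₀ * x₁ = (algebraMap (𝓞 F) F θ) * y₀ * y₁ →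
        x₀ = 0 ∧ x₁ = 0 ∧ y₀ = 0 ∧ y₁ = 0) :
    ∀ z : ℍ[F, algebraMap (𝓞 F) F a, algebraMap (𝓞 F) F γ],
      z * qsigma (algebraMap (𝓞 F) F a) (algebraMap (𝓞 F) F γ) z ≠
        ((algebraMap (𝓞 F) F θ : F) :
          ℍ[F, algebraMap (𝓞 F) F a, algebraMap (𝓞 F) F γ]) := by
  intro z hz
  have hp : Prime a := (Ideal.span_singleton_prime ha0).1 hprime
  have hm : (Ideal.span ({a} : Set (𝓞 F))).IsMaximal :=
    hprime.isMaximal (by simpa using ha0)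
  obtain ⟨x0, x1, x2, x3⟩ := z
  have e0 := congrArg QuaternionAlgebra.re hz
  have e1 := congrArg QuaternionAlgebra.imI hz
  have e2 := congrArg QuaternionAlgebra.imJ hz
  have e3 := congrArg QuaternionAlgebra.imK hz
  simp [qsigma] at e0 e1 e2 e3
  have ha0' : algebraMap (𝓞 F) F a ≠ 0 := by simpa using ha0
  generalize hA : algebraMap (𝓞 F) F a = A at *
  by_cases h2 : x2 = 0
  · subst h2
    obtain ⟨p0, q0, hq0, rfl⟩ := IsFractionRing.div_surjective (A := 𝓞 F) x0
    obtain ⟨p1, q1, hq1, rfl⟩ := IsFractionRing.div_surjective (A := 𝓞 F) x1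
    obtain ⟨p3, q3, hq3, rfl⟩ := IsFractionRing.div_surjective (A := 𝓞 F) x3
    have n0 := nonZeroDivisors.ne_zero hq0
    have n1 := nonZeroDivisors.ne_zero hq1
    have n3 := nonZeroDivisors.ne_zero hq3
    have m0 : algebraMap (𝓞 F) F q0 ≠ 0 := by simpa using n0
    have m1 : algebraMap (𝓞 F) F q1 ≠ 0 := by simpa using n1
    have m3 : algebraMap (𝓞 F) F q3 ≠ 0 := by simpa using n3
    have key : θ * (q0 * q1 * q3) ^ 2 = (p0 * q1 * q3) ^ 2 - a * (p1 * q0 * q3) ^ 2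
        + γ * a * (p3 * q0 * q1) ^ 2 := by
      apply FaithfulSMul.algebraMap_injective (𝓞 F) F
      simp only [map_mul, map_add, map_sub, map_pow, hA]
      rw [← e0]
      field_simp
      ring
    have hfin : FiniteMultiplicity a (q0 * q1 * q3) :=
      FiniteMultiplicity.of_not_isUnit hp.not_isUnit (mul_ne_zero (mul_ne_zero n0 n1) n3)
    obtain ⟨n, hn⟩ := hfin
    exact hn (aux_descent a γ θ hp hm hθ hγ (n + 1) _ _ _ _ key)
  · have h0 : x0 = 0 := by
      have : (2 : F) * x2 * x0 = 0 := by linear_combination e2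
      simpa [h2] using this
    have h1 : x1 = 0 := by
      have : (2 : F) * x2 * x1 = 0 := by linear_combination e3
      simpa [h2] using this
    subst h0 h1
    have := hformK x2 x3 1 0 (by linear_combination e0) (by
      linear_combination (1 / 2 : F) * e1)
    simp at this
end
end
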